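/- Let N be an odd positive integer and u an integer with gcd(u, N) = 1. Define the root Zadoff–Chu sequence s : ℤ → ℂ by s(t) := exp(−iπ·u·t·(t+1)/N). Then for all integers a and b, Σ_{t=0}^{N−1} s(t−a)·conj(s(t−b)) equals N if N divides (a−b), and equals 0 otherwise. -/

import Mathlib

/-- Zero-autocorrelation property (equation (2) and step (b) of (6)) of the
root Zadoff–Chu sequence `s(t) = exp(-iπ u t(t+1)/N)` of odd length `N` with
`gcd(u, N) = 1`: the circular cross-correlation of two integer shifts of `s`
equals `N` when the shifts agree modulo `N`, and `0` otherwise. -/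
theorem zadoff_chu_autocorrelation
    (N : ℕ) (hN : 0 < N) (hNodd : Odd N)
    (u : ℤ) (hu : Int.gcd u (N : ℤ) = 1)
    (s : ℤ → ℂ)
    (hs : ∀ t : ℤ, s t =
      Complex.exp (-(Real.pi * Complex.I * (u : ℂ) * (t : ℂ) * ((t : ℂ) + 1)) / (N : ℂ)))
    (a b : ℤ) :
    ∑ t ∈ Finset.range N, s ((t : ℤ) - a) * (starRingEnd ℂ) (s ((t : ℤ) - b)) =
      if (N : ℤ) ∣ (a - b) then (N : ℂ) else 0 := by
  have hN0 : (N : ℂ) ≠ 0 := by exact_mod_cast hN.ne'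
  have hterm : ∀ t : ℕ, s ((t : ℤ) - a) * (starRingEnd ℂ) (s ((t : ℤ) - b)) =
      Complex.exp (Real.pi * Complex.I * u * (a - b) * (1 - a - b) / N) *
        Complex.exp (2 * Real.pi * Complex.I * u * (a - b) / N) ^ t := by
    intro t
    rw [hs, hs, ← Complex.exp_conj, ← Complex.exp_add, ← Complex.exp_nat_mul,
      ← Complex.exp_add]
    congr 1
    simp only [map_div₀, map_neg, map_mul, map_add, map_one, Complex.conj_ofReal,
      Complex.conj_I, Complex.conj_natCast, map_intCast]
    push_cast
    field_simp
    ring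
  have hpi : (2 * Real.pi * Complex.I : ℂ) ≠ 0 := Complex.two_pi_I_ne_zero
  rw [Finset.sum_congr rfl (fun t _ => hterm t), ← Finset.mul_sum]
  split_ifs with h
  · obtain ⟨k, hk⟩ := h
    have hkC : (a : ℂ) - b = N * k := by exact_mod_cast hk
    have hev : Even (k * (1 - a - b)) := by
      obtain ⟨n, hn⟩ := hNodd
      rcases Int.even_or_odd k with h1 | h1
      · exact h1.mul_right _
      · refine Even.mul_left ?_ _
        obtain ⟨j, hj⟩ := h1
        refine ⟨-b - (n * k + j), ?_⟩
        have : a = b + (2 * n + 1) * k := by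
          rw [hn] at hk; push_cast at hk; linarith
        subst hj
        rw [this]
        ring
    obtain ⟨m, hm⟩ := hev
    have hmC : (k : ℂ) * (1 - a - b) = m + m := by exact_mod_cast hm
    have h1 : Complex.exp (Real.pi * Complex.I * u * (a - b) * (1 - a - b) / N) = 1 := by
      rw [Complex.exp_eq_one_iff]
      refine ⟨u * m, ?_⟩
      rw [hkC]
      push_cast
      field_simp
      linear_combination (u : ℂ) * hmC
    have h2 : Complex.exp (2 * Real.pi * Complex.I * u * (a - b) / N) = 1 := by
      rw [Complex.exp_eq_one_iff]
      refine ⟨u * k, ?_⟩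
      rw [hkC]
      push_cast
      field_simp
    rw [h1, h2]
    simp
  · have hw : Complex.exp (2 * Real.pi * Complex.I * u * (a - b) / N) ≠ 1 := by
      intro hw
      rw [Complex.exp_eq_one_iff] at hw
      obtain ⟨n, hn⟩ := hw
      apply h
      have h3 : (u : ℂ) * (a - b) = N * n := by
        apply mul_left_cancel₀ hpi
        rw [div_eq_iff hN0] at hn
        linear_combination hn
      have h4 : u * (a - b) = N * n := by exact_mod_cast h3
      refine Int.dvd_of_dvd_mul_right_of_gcd_one (b := u) ⟨n, h4⟩ ?_
      rwa [Int.gcd_comm]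
    have hwN : Complex.exp (2 * Real.pi * Complex.I * u * (a - b) / N) ^ N = 1 := by
      rw [← Complex.exp_nat_mul, Complex.exp_eq_one_iff]
      refine ⟨u * (a - b), ?_⟩
      push_cast
      field_simp
    rw [geom_sum_eq hw, hwN]
    simp
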